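/- arXiv:2009.14815 — 2 statements merged into one kernel-verified Lean document; each statement's English description precedes it below -/
import Mathlib

section
/- In U(sl₂)^{⊗3} with notation as above, the classical Racah relation [X, Z] = 4{X,Y} + 4X² − 4(k₁+k₂+k₃+k₄)X + 4(k₁−k₂)(k₄−k₃) holds, where Z = [X,Y], {A,B} = AB + BA, and k₄ = k₁+k₂+k₃+2(T^{(1,2)}+T^{(2,3)}+T^{(1,3)}). -/
/-- The defining relations of `U(sl₂)^{⊗3}` in terms of the matrix-unit
generators `e a i j` (the element `e_{ij}` of the `a`-th tensor factor):
tracelessness `e_{11} + e_{22} = 0` in each factor, the `sl₂` commutation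
relations `[e_{ij}, e_{kl}] = δ_{jk} e_{il} - δ_{li} e_{kj}` within each
factor, and commutativity between distinct factors. -/
def SL2Cube {A : Type*} [Ring A] (e : Fin 3 → Fin 2 → Fin 2 → A) : Prop :=
  (∀ a, e a 0 0 + e a 1 1 = 0) ∧
  (∀ (a : Fin 3) (i j k l : Fin 2),
      e a i j * e a k l - e a k l * e a i j =
        (if j = k then e a i l else 0) - (if l = i then e a k j else 0)) ∧
  (∀ (a b : Fin 3), a ≠ b → ∀ i j k l : Fin 2, Commute (e a i j) (e b k l))

/-- The polarized trace `T^{(a,b)} = Σ_{i₁,i₂} e_{i₂i₁}^{(a)} e_{i₁i₂}^{(b)}`. -/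
def T2 {A : Type*} [Ring A] (e : Fin 3 → Fin 2 → Fin 2 → A) (a b : Fin 3) : A :=
  ∑ i1 : Fin 2, ∑ i2 : Fin 2, e a i2 i1 * e b i1 i2

/-- The polarized trace `T^{(1,2,3)} = Σ e_{i₂i₁}^{(1)} e_{i₃i₂}^{(2)} e_{i₁i₃}^{(3)}`. -/
def T3 {A : Type*} [Ring A] (e : Fin 3 → Fin 2 → Fin 2 → A) : A :=
  ∑ i1 : Fin 2, ∑ i2 : Fin 2, ∑ i3 : Fin 2, e 0 i2 i1 * e 1 i3 i2 * e 2 i1 i3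

/-- `k_a = T^{(a,a)}`. -/
def kA {A : Type*} [Ring A] (e : Fin 3 → Fin 2 → Fin 2 → A) (a : Fin 3) : A :=
  T2 e a a

/-- `X = k₁ + k₂ + 2 T^{(1,2)}`. -/
def XX {A : Type*} [Ring A] (e : Fin 3 → Fin 2 → Fin 2 → A) : A :=
  kA e 0 + kA e 1 + 2 * T2 e 0 1

/-- `Y = k₂ + k₃ + 2 T^{(2,3)}`. -/
def YY {A : Type*} [Ring A] (e : Fin 3 → Fin 2 → Fin 2 → A) : A :=
  kA e 1 + kA e 2 + 2 * T2 e 1 2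

/-- `Z = [X,Y]`. -/
def ZZ {A : Type*} [Ring A] (e : Fin 3 → Fin 2 → Fin 2 → A) : A :=
  XX e * YY e - YY e * XX e

/-- `k₄ = k₁ + k₂ + k₃ + 2(T^{(1,2)} + T^{(2,3)} + T^{(1,3)})`. -/
def k4 {A : Type*} [Ring A] (e : Fin 3 → Fin 2 → Fin 2 → A) : A :=
  kA e 0 + kA e 1 + kA e 2 + 2 * (T2 e 0 1 + T2 e 1 2 + T2 e 0 2)

set_option linter.unusedSimpArgs false
set_option linter.unusedVariables false

/-- The double commutator identity for one component, in two commuting copies of `sl₂`. -/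
theorem comp_identity {A : Type*} [Ring A] (h e f h' e' f' : A)
    (r1 : e * h = h * e - e) (r2 : f * h = h * f + f) (r3 : f * e = e * f - 2 * h)
    (s1 : e' * h' = h' * e' - e') (s2 : f' * h' = h' * f' + f')
    (s3 : f' * e' = e' * f' - 2 * h')
    (c1 : h' * h = h * h') (c2 : h' * e = e * h') (c3 : h' * f = f * h')
    (c4 : e' * h = h * e') (c5 : e' * e = e * e') (c6 : e' * f = f * e')
    (c7 : f' * h = h * f') (c8 : f' * e = e * f') (c9 : f' * f = f * f')
    (t k1 k2 : A) (ht : t = 2 * (h * h') + e * f' + f * e')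
    (hk1 : k1 = 2 * (h * h) + e * f + f * e)
    (hk2 : k2 = 2 * (h' * h') + e' * f' + f' * e') :
    (t * (t * h' - h' * t) - (t * h' - h' * t) * t
      = 2 * (t * h' - h * t + k1 * h' - k2 * h)) ∧
    (t * (t * e' - e' * t) - (t * e' - e' * t) * t
      = 2 * (t * e' - e * t + k1 * e' - k2 * e)) ∧
    (t * (t * f' - f' * t) - (t * f' - f' * t) * t
      = 2 * (t * f' - f * t + k1 * f' - k2 * f)) ∧
    (t * (h + h') = (h + h') * t) ∧ (t * (e + e') = (e + e') * t) ∧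
    (t * (f + f') = (f + f') * t) ∧
    (k1 * h = h * k1) ∧ (k1 * e = e * k1) ∧ (k1 * f = f * k1) := by
  have L : ∀ {x y z : A}, x * y = z → ∀ w, x * (y * w) = z * w := by
    intro x y z hh w; rw [← mul_assoc, hh]
  subst ht hk1 hk2
  refine ⟨?_, ?_, ?_, ?_, ?_, ?_, ?_, ?_, ?_⟩ <;>
  · simp only [two_mul, mul_add, add_mul, mul_sub, sub_mul, mul_assoc, r1, r2, r3, s1, s2, s3,
      c1, c2, c3, c4, c5, c6, c7, c8, c9, L r1, L r2, L r3, L s1, L s2, L s3,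
      L c1, L c2, L c3, L c4, L c5, L c6, L c7, L c8, L c9]
    abel

/-- Summing the components against a third commuting copy. -/
theorem sum_identity {A : Type*} [Ring A] (t k1 k2 h e f h' e' f' p q r : A)
    (i1 : t * (t * h' - h' * t) - (t * h' - h' * t) * t
      = 2 * (t * h' - h * t + k1 * h' - k2 * h))
    (i2 : t * (t * e' - e' * t) - (t * e' - e' * t) * t
      = 2 * (t * e' - e * t + k1 * e' - k2 * e))
    (i3 : t * (t * f' - f' * t) - (t * f' - f' * t) * t
      = 2 * (t * f' - f * t + k1 * f' - k2 * f))
    (j1 : t * (h + h') = (h + h') * t) (j2 : t * (e + e') = (e + e') * t)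
    (j3 : t * (f + f') = (f + f') * t)
    (cp : p * t = t * p) (cq : q * t = t * q) (cr : r * t = t * r)
    (u v : A) (hu : u = 2 * (h' * p) + e' * r + f' * q)
    (hv : v = 2 * (h * p) + e * r + f * q) :
    (t * (t * u - u * t) - (t * u - u * t) * t
      = 2 * (t * u - v * t + k1 * u - k2 * v)) ∧ t * (v + u) = (v + u) * t := by
  have L : ∀ {x y z : A}, x * y = z → ∀ w, x * (y * w) = z * w := by
    intro x y z hh w; rw [← mul_assoc, hh]
  subst hu hv
  constructor
  · have a1 := congrArg (· * p) i1
    have a2 := congrArg (· * r) i2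
    have a3 := congrArg (· * q) i3
    rw [← sub_eq_zero] at a1 a2 a3 ⊢
    have := congrArg₂ (· + ·) (congrArg₂ (· + ·) (congrArg₂ (· + ·) a1 a1) a2) a3
    simp only [add_zero] at this
    rw [← this]
    simp only [two_mul, mul_add, add_mul, mul_sub, sub_mul, mul_assoc, cp, cq, cr,
      L cp, L cq, L cr]
    abel
  · have a1 := congrArg (· * p) j1
    have a2 := congrArg (· * r) j2
    have a3 := congrArg (· * q) j3
    rw [← sub_eq_zero] at a1 a2 a3 ⊢
    have := congrArg₂ (· + ·) (congrArg₂ (· + ·) (congrArg₂ (· + ·) a1 a1) a2) a3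
    simp only [add_zero] at this
    rw [← this]
    simp only [two_mul, mul_add, add_mul, mul_sub, sub_mul, mul_assoc, cp, cq, cr,
      L cp, L cq, L cr]
    abel

/-- The Racah relation from the abstract commutation rules. -/
theorem final_identity {A : Type*} [Ring A] (t u v k1 k2 k3 : A)
    (i : t * (t * u - u * t) - (t * u - u * t) * t
      = 2 * (t * u - v * t + k1 * u - k2 * v))
    (j : t * (v + u) = (v + u) * t)
    (a1 : t * k1 = k1 * t) (a2 : t * k2 = k2 * t) (a3 : t * k3 = k3 * t)
    (b1 : u * k1 = k1 * u) (b2 : u * k2 = k2 * u) (b3 : u * k3 = k3 * u)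
    (d1 : v * k1 = k1 * v) (d2 : v * k2 = k2 * v) (d3 : v * k3 = k3 * v)
    (m1 : k2 * k1 = k1 * k2) (m2 : k3 * k1 = k1 * k3) (m3 : k3 * k2 = k2 * k3)
    (X Y k4 : A) (hX : X = k1 + k2 + 2 * t) (hY : Y = k2 + k3 + 2 * u)
    (hk : k4 = k1 + k2 + k3 + 2 * (t + u + v)) :
    X * (X * Y - Y * X) - (X * Y - Y * X) * X =
      4 * (X * Y + Y * X) + 4 * X ^ 2 - 4 * ((k1 + k2 + k3 + k4) * X)
        + 4 * ((k1 - k2) * (k4 - k3)) := by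
  have L : ∀ {x y z : A}, x * y = z → ∀ w, x * (y * w) = z * w := by
    intro x y z hh w; rw [← mul_assoc, hh]
  have hj : t * v = v * t + u * t - t * u := by
    rw [mul_add, add_mul] at j; rw [← j]; abel
  subst hX hY hk
  have E : ∀ x : A, 4 * x = x + x + x + x := fun x => by noncomm_ring
  have i' := sub_eq_zero.mpr i
  have i8 := congrArg (fun x : A => 8 * x) i'
  simp only [mul_zero] at i8
  have E8 : ∀ x : A, 8 * x = x + x + x + x + x + x + x + x := fun x => by noncomm_ring
  rw [← sub_eq_zero, ← i8]
  simp only [E, E8, pow_two, two_mul, mul_add, add_mul, mul_sub, sub_mul, mul_assoc,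
    a1, a2, a3, b1, b2, b3, d1, d2, d3, m1, m2, m3, L a1, L a2, L a3, L b1, L b2, L b3,
    L d1, L d2, L d3, L m1, L m2, L m3, hj, L hj]
  abel

/-- The classical Racah relation in `U(sl₂)^{⊗3}`:
`[X,Z] = 4{X,Y} + 4X² − 4(k₁+k₂+k₃+k₄)X + 4(k₁−k₂)(k₄−k₃)`. -/
theorem racah_relation_XZ {A : Type*} [Ring A]
    (e : Fin 3 → Fin 2 → Fin 2 → A) (h : SL2Cube e) :
    XX e * ZZ e - ZZ e * XX e =
      4 * (XX e * YY e + YY e * XX e) + 4 * (XX e) ^ 2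
        - 4 * ((kA e 0 + kA e 1 + kA e 2 + k4 e) * XX e)
        + 4 * ((kA e 0 - kA e 1) * (k4 e - kA e 2)) := by
  obtain ⟨h0, h1, h2⟩ := h
  have g : ∀ a, e a 1 1 = - e a 0 0 := fun a => by
    rw [eq_neg_iff_add_eq_zero, add_comm]; exact h0 a
  have r1 : ∀ a, e a 0 1 * e a 0 0 = e a 0 0 * e a 0 1 - e a 0 1 := fun a => by
    have := h1 a 0 0 0 1
    simp at this
    rw [sub_eq_iff_eq_add] at this
    rw [this]; abel
  have r2 : ∀ a, e a 1 0 * e a 0 0 = e a 0 0 * e a 1 0 + e a 1 0 := fun a => by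
    have := h1 a 1 0 0 0
    simp at this
    rw [sub_eq_iff_eq_add] at this
    rw [this]; abel
  have r3 : ∀ a, e a 1 0 * e a 0 1 = e a 0 1 * e a 1 0 - 2 * e a 0 0 := fun a => by
    have := h1 a 1 0 0 1
    simp [g] at this
    rw [sub_eq_iff_eq_add] at this
    rw [this, two_mul]; abel
  have c : ∀ a b, a ≠ b → ∀ i j k l, e a i j * e b k l = e b k l * e a i j :=
    fun a b hab i j k l => (h2 a b hab i j k l).eq
  have hT : ∀ a b, T2 e a b
      = 2 * (e a 0 0 * e b 0 0) + e a 0 1 * e b 1 0 + e a 1 0 * e b 0 1 := fun a b => by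
    simp only [T2, Fin.sum_univ_two, g, two_mul, neg_mul_neg]; abel
  have main : ∀ a b, b ≠ a → _ := fun a b hab =>
    comp_identity (e a 0 0) (e a 0 1) (e a 1 0) (e b 0 0) (e b 0 1) (e b 1 0)
      (r1 a) (r2 a) (r3 a) (r1 b) (r2 b) (r3 b)
      (c b a hab _ _ _ _) (c b a hab _ _ _ _) (c b a hab _ _ _ _)
      (c b a hab _ _ _ _) (c b a hab _ _ _ _) (c b a hab _ _ _ _)
      (c b a hab _ _ _ _) (c b a hab _ _ _ _) (c b a hab _ _ _ _)
      (T2 e a b) (kA e a) (kA e b) (hT a b) (hT a a) (hT b b)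
  -- generators of distinct factors commute with everything built from the others
  have ct : ∀ i j, Commute (e 2 i j) (T2 e 0 1) := fun i j =>
    Commute.sum_right _ _ _ fun _ _ => Commute.sum_right _ _ _ fun _ _ =>
      (h2 2 0 (by decide) _ _ _ _).mul_right (h2 2 1 (by decide) _ _ _ _)
  -- the Casimirs are central
  have ke : ∀ a b i j, Commute (e b i j) (kA e a) := by
    intro a b i j
    by_cases hab : b = a
    · subst hab
      obtain ⟨b', hb⟩ : ∃ b', b' ≠ b := exists_ne b
      obtain ⟨-, -, -, -, -, -, q1, q2, q3⟩ := main b b' hb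
      have q4 : Commute (e b 1 1) (kA e b) := by
        rw [g]; exact Commute.neg_left q1.symm
      fin_cases i <;> fin_cases j
      · exact q1.symm
      · exact q2.symm
      · exact q3.symm
      · exact q4
    · unfold kA T2
      exact Commute.sum_right _ _ _ fun _ _ => Commute.sum_right _ _ _ fun _ _ =>
        (h2 b a hab _ _ _ _).mul_right (h2 b a hab _ _ _ _)
  have kT : ∀ a b d, T2 e b d * kA e a = kA e a * T2 e b d := fun a b d =>
    (Commute.sum_left _ _ _ fun _ _ => Commute.sum_left _ _ _ fun _ _ =>
      (ke a b _ _).mul_left (ke a d _ _) : Commute (T2 e b d) (kA e a)).eq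
  obtain ⟨i1, i2, i3, j1, j2, j3, -⟩ := main 0 1 (by decide)
  obtain ⟨I, J⟩ := sum_identity _ _ _ _ _ _ _ _ _ (e 2 0 0) (e 2 0 1) (e 2 1 0)
    i1 i2 i3 j1 j2 j3 (ct _ _).eq (ct _ _).eq (ct _ _).eq
    (T2 e 1 2) (T2 e 0 2) (hT 1 2) (hT 0 2)
  exact final_identity (T2 e 0 1) (T2 e 1 2) (T2 e 0 2) (kA e 0) (kA e 1) (kA e 2) I J
    (kT _ _ _) (kT _ _ _) (kT _ _ _) (kT _ _ _) (kT _ _ _) (kT _ _ _)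
    (kT _ _ _) (kT _ _ _) (kT _ _ _) (kT _ _ _) (kT _ _ _) (kT _ _ _)
    (XX e) (YY e) (k4 e) rfl rfl rfl
end

section
/- In U(sl₂)^{⊗3} with notation as above, the element Γ := Z² − 8(XYX + YXY) + 4(k₁+k₂+k₃+k₄−4){X,Y} − 8(k₁−k₂)(k₄−k₃)Y − 8(k₃−k₂)(k₄−k₁)X equals 8(k₁−k₂+k₃−k₄)(k₁k₃−k₂k₄) − 32(k₁k₃+k₂k₄). -/
set_option maxHeartbeats 8000000
set_option linter.unusedVariables false
set_option linter.unusedSimpArgs false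

theorem push_right {A : Type*} [Ring A] {x y c : A} (h : y * x = x * y + c) (z : A) :
    y * (x * z) = x * (y * z) + c * z := by
  rw [← mul_assoc, h, add_mul, mul_assoc]

theorem push_right_sub {A : Type*} [Ring A] {x y c : A} (h : y * x = x * y - c) (z : A) :
    y * (x * z) = x * (y * z) - c * z := by
  rw [← mul_assoc, h, sub_mul, mul_assoc]

theorem push_right_comm {A : Type*} [Ring A] {x y : A} (h : y * x = x * y) (z : A) :
    y * (x * z) = x * (y * z) := by
  rw [← mul_assoc, h, mul_assoc]

theorem push_word {A : Type*} [Ring A] {x y c : A} (h : y * x = c) (z : A) :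
    y * (x * z) = c * z := by
  rw [← mul_assoc, h]

/-- All relations among the polarized traces, by normal ordering of words in the generators. -/
theorem trace_relations {A : Type*} [Ring A] {f1 h1 e1 f2 h2 e2 f3 h3 e3 : A}
    {k1 k2 k3 p q r W : A}
    (r_h1f1 : h1 * f1 = f1 * h1 - f1) (r_e1f1 : e1 * f1 = f1 * e1 + (2:ℤ) • h1)
    (r_e1h1 : e1 * h1 = h1 * e1 - e1) (r_f2f1 : f2 * f1 = f1 * f2) (r_f2h1 : f2 * h1 = h1 * f2)
    (r_f2e1 : f2 * e1 = e1 * f2) (r_h2f1 : h2 * f1 = f1 * h2) (r_h2h1 : h2 * h1 = h1 * h2)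
    (r_h2e1 : h2 * e1 = e1 * h2) (r_h2f2 : h2 * f2 = f2 * h2 - f2) (r_e2f1 : e2 * f1 = f1 * e2)
    (r_e2h1 : e2 * h1 = h1 * e2) (r_e2e1 : e2 * e1 = e1 * e2)
    (r_e2f2 : e2 * f2 = f2 * e2 + (2:ℤ) • h2) (r_e2h2 : e2 * h2 = h2 * e2 - e2)
    (r_f3f1 : f3 * f1 = f1 * f3) (r_f3h1 : f3 * h1 = h1 * f3) (r_f3e1 : f3 * e1 = e1 * f3)
    (r_f3f2 : f3 * f2 = f2 * f3) (r_f3h2 : f3 * h2 = h2 * f3) (r_f3e2 : f3 * e2 = e2 * f3)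
    (r_h3f1 : h3 * f1 = f1 * h3) (r_h3h1 : h3 * h1 = h1 * h3) (r_h3e1 : h3 * e1 = e1 * h3)
    (r_h3f2 : h3 * f2 = f2 * h3) (r_h3h2 : h3 * h2 = h2 * h3) (r_h3e2 : h3 * e2 = e2 * h3)
    (r_h3f3 : h3 * f3 = f3 * h3 - f3) (r_e3f1 : e3 * f1 = f1 * e3) (r_e3h1 : e3 * h1 = h1 * e3)
    (r_e3e1 : e3 * e1 = e1 * e3) (r_e3f2 : e3 * f2 = f2 * e3) (r_e3h2 : e3 * h2 = h2 * e3)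
    (r_e3e2 : e3 * e2 = e2 * e3) (r_e3f3 : e3 * f3 = f3 * e3 + (2:ℤ) • h3)
    (r_e3h3 : e3 * h3 = h3 * e3 - e3)
    (d_k1 : k1 = (2:ℤ) • (h1 * h1) + e1 * f1 + f1 * e1)
    (d_k2 : k2 = (2:ℤ) • (h2 * h2) + e2 * f2 + f2 * e2)
    (d_k3 : k3 = (2:ℤ) • (h3 * h3) + e3 * f3 + f3 * e3)
    (d_p : p = (2:ℤ) • (h1 * h2) + e1 * f2 + f1 * e2)
    (d_q : q = (2:ℤ) • (h2 * h3) + e2 * f3 + f2 * e3)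
    (d_r : r = (2:ℤ) • (h1 * h3) + e1 * f3 + f1 * e3)
    (d_W : W = (2:ℤ) • (f1 * h2 * e3 - h1 * f2 * e3 - f1 * e2 * h3 + e1 * f2 * h3 + h1 * e2 * f3 - e1 * h2 * f3)) :
    p * q = q * p + W ∧
    r * p = p * r + W ∧
    q * r = r * q + W ∧
    W * q = q * W + (2:ℤ) • (p * q) - (2:ℤ) • (q * r) - (2:ℤ) • (k2 * r) + (2:ℤ) • (k3 * p) ∧
    W * p = p * W - (2:ℤ) • (p * q) + (2:ℤ) • (p * r) - (2:ℤ) • (k1 * q) + (2:ℤ) • (k2 * r) +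
    (2:ℤ) • W ∧
    W * W = (2:ℤ) • (k1 * q * q) - (2:ℤ) • (k1 * k2 * k3) + (2:ℤ) • (k2 * r * r) + (2:ℤ) • (k3
    * p * p) - (4:ℤ) • (p * q * r) + (8:ℤ) • (p * q) + (4:ℤ) • (k1 * q) - (4:ℤ) • (k2 * r) +
    (4:ℤ) • (k3 * p) - (4:ℤ) • W + (2:ℤ) • (W * p) - (2:ℤ) • (W * q) + (2:ℤ) • (W * r) ∧
    p * k1 = k1 * p ∧
    q * k1 = k1 * q ∧
    r * k1 = k1 * r ∧
    p * k2 = k2 * p ∧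
    q * k2 = k2 * q ∧
    r * k2 = k2 * r ∧
    p * k3 = k3 * p ∧
    q * k3 = k3 * q ∧
    r * k3 = k3 * r ∧
    k2 * k1 = k1 * k2 ∧
    k3 * k1 = k1 * k3 ∧
    k3 * k2 = k2 * k3 ∧
    W * k1 = k1 * W ∧
    W * k2 = k2 * W ∧
    W * k3 = k3 * W := by
  subst d_k1 d_k2 d_k3 d_p d_q d_r d_W
  refine ⟨?_, ?_, ?_, ?_, ?_, ?_, ?_, ?_, ?_, ?_, ?_, ?_, ?_, ?_, ?_, ?_, ?_, ?_, ?_, ?_, ?_⟩ <;>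
  · simp only [mul_add, add_mul, mul_sub, sub_mul, mul_assoc, smul_add, smul_sub, smul_mul_assoc,
      mul_smul_comm, smul_smul,
      r_h1f1, r_e1f1, r_e1h1, r_f2f1, r_f2h1, r_f2e1, r_h2f1, r_h2h1, r_h2e1, r_h2f2, r_e2f1,
      r_e2h1, r_e2e1, r_e2f2, r_e2h2, r_f3f1, r_f3h1, r_f3e1, r_f3f2, r_f3h2, r_f3e2, r_h3f1,
      r_h3h1, r_h3e1, r_h3f2, r_h3h2, r_h3e2, r_h3f3, r_e3f1, r_e3h1, r_e3e1, r_e3f2, r_e3h2,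
      r_e3e2, r_e3f3, r_e3h3, push_right_sub r_h1f1, push_right r_e1f1, push_right_sub r_e1h1,
      push_right_comm r_f2f1, push_right_comm r_f2h1, push_right_comm r_f2e1,
      push_right_comm r_h2f1, push_right_comm r_h2h1, push_right_comm r_h2e1,
      push_right_sub r_h2f2, push_right_comm r_e2f1, push_right_comm r_e2h1,
      push_right_comm r_e2e1, push_right r_e2f2, push_right_sub r_e2h2, push_right_comm r_f3f1,
      push_right_comm r_f3h1, push_right_comm r_f3e1, push_right_comm r_f3f2,
      push_right_comm r_f3h2, push_right_comm r_f3e2, push_right_comm r_h3f1,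
      push_right_comm r_h3h1, push_right_comm r_h3e1, push_right_comm r_h3f2,
      push_right_comm r_h3h2, push_right_comm r_h3e2, push_right_sub r_h3f3,
      push_right_comm r_e3f1, push_right_comm r_e3h1, push_right_comm r_e3e1,
      push_right_comm r_e3f2, push_right_comm r_e3h2, push_right_comm r_e3e2,
      push_right r_e3f3, push_right_sub r_e3h3]
    abel

/-- The value of `Γ`, from the relations among the polarized traces. -/
theorem gamma_of_relations {A : Type*} [Ring A] {k1 k2 k3 p q r W X Y k : A}
    (r_pq : p * q = q * p + W)
    (r_pr : r * p = p * r + W)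
    (r_qr : q * r = r * q + W)
    (r_Wq : W * q = q * W + (2:ℤ) • (p * q) - (2:ℤ) • (q * r) - (2:ℤ) • (k2 * r) + (2:ℤ) • (k3
    * p))
    (r_Wp : W * p = p * W - (2:ℤ) • (p * q) + (2:ℤ) • (p * r) - (2:ℤ) • (k1 * q) + (2:ℤ) • (k2
    * r) + (2:ℤ) • W)
    (r_WW : W * W = (2:ℤ) • (k1 * q * q) - (2:ℤ) • (k1 * k2 * k3) + (2:ℤ) • (k2 * r * r) +
    (2:ℤ) • (k3 * p * p) - (4:ℤ) • (p * q * r) + (8:ℤ) • (p * q) + (4:ℤ) • (k1 * q) - (4:ℤ) •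
    (k2 * r) + (4:ℤ) • (k3 * p) - (4:ℤ) • W + (2:ℤ) • (W * p) - (2:ℤ) • (W * q) + (2:ℤ) • (W *
    r))
    (r_k1p : p * k1 = k1 * p)
    (r_k1q : q * k1 = k1 * q)
    (r_k1r : r * k1 = k1 * r)
    (r_k2p : p * k2 = k2 * p)
    (r_k2q : q * k2 = k2 * q)
    (r_k2r : r * k2 = k2 * r)
    (r_k3p : p * k3 = k3 * p)
    (r_k3q : q * k3 = k3 * q)
    (r_k3r : r * k3 = k3 * r)
    (r_k2k1 : k2 * k1 = k1 * k2)
    (r_k3k1 : k3 * k1 = k1 * k3)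
    (r_k3k2 : k3 * k2 = k2 * k3)
    (r_k1W : W * k1 = k1 * W)
    (r_k2W : W * k2 = k2 * W)
    (r_k3W : W * k3 = k3 * W)
    (dX : X = k1 + k2 + (2:ℤ) • p) (dY : Y = k2 + k3 + (2:ℤ) • q)
    (dk : k = k1 + k2 + k3 + (2:ℤ) • (p + q + r)) :
    (X * Y - Y * X) * (X * Y - Y * X) - (8:ℤ) • (X * Y * X + Y * X * Y)
      + (4:ℤ) • ((k1 + k2 + k3 + k - (4:ℤ) • 1) * (X * Y + Y * X))
      - (8:ℤ) • ((k1 - k2) * (k - k3) * Y)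
      - (8:ℤ) • ((k3 - k2) * (k - k1) * X) =
    (8:ℤ) • ((k1 - k2 + k3 - k) * (k1 * k3 - k2 * k))
      - (32:ℤ) • (k1 * k3 + k2 * k) := by
  have s_qp : q * p = p * q - W := by rw [r_pq]; abel
  have s_rq : r * q = q * r - W := by rw [r_qr]; abel
  have hS : W * (p + q + r) = (p + q + r) * W := by
    have : ∀ s : A, p * s = s * p → q * s = s * q → W * s = s * W := by
      intro s hp hq
      have hW : W = p * q - q * p := by rw [r_pq]; abel
      rw [hW, sub_mul, mul_sub, mul_assoc, mul_assoc, hp, hq, ← mul_assoc, ← mul_assoc, hp, hq,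
        mul_assoc, mul_assoc]
    apply this
    · simp only [mul_add, add_mul, s_qp, r_pr]; abel
    · simp only [mul_add, add_mul, s_qp, s_rq]; abel
  have s_pW : p * W = W * p + (2:ℤ) • (p * q) - (2:ℤ) • (p * r) + (2:ℤ) • (k1 * q)
      - (2:ℤ) • (k2 * r) - (2:ℤ) • W := by rw [r_Wp]; abel
  have s_qW : q * W = W * q - (2:ℤ) • (p * q) + (2:ℤ) • (q * r) + (2:ℤ) • (k2 * r)
      - (2:ℤ) • (k3 * p) := by rw [r_Wq]; abel
  have s_rW : r * W = W * r + (2:ℤ) • (p * r) - (2:ℤ) • (q * r) - (2:ℤ) • (k1 * q)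
      + (2:ℤ) • (k3 * p) + (2:ℤ) • W := by
    have h2 : r * W = W * (p + q + r) - p * W - q * W := by rw [hS]; noncomm_ring
    rw [h2, s_pW, s_qW, mul_add, mul_add]; abel
  have hZ : X * Y - Y * X = (4:ℤ) • W := by
    subst dX dY
    simp only [mul_add, add_mul, smul_add, smul_mul_assoc, mul_smul_comm, smul_smul,
      r_k1p, r_k1q, r_k1r, r_k2p, r_k2q, r_k2r, r_k3p, r_k3q, r_k3r, r_k2k1, r_k3k1, r_k3k2, r_k1W, r_k2W, r_k3W, s_qp, smul_sub]
    abel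
  rw [hZ]
  subst dX dY dk
  simp only [mul_add, add_mul, mul_sub, sub_mul, mul_assoc, smul_add, smul_sub, smul_mul_assoc,
    mul_smul_comm, smul_smul, mul_one, one_mul, r_WW, s_pW, s_qW, s_rW, s_qp, s_rq, r_pr,
    push_word s_pW, push_word s_qW, push_word s_rW, push_word s_qp, push_word s_rq,
    push_word r_pr, push_word r_WW,
    r_k1p, r_k1q, r_k1r, r_k2p, r_k2q, r_k2r, r_k3p, r_k3q, r_k3r, r_k2k1, r_k3k1, r_k3k2,
    r_k1W, r_k2W, r_k3W, push_right_comm r_k1p, push_right_comm r_k1q, push_right_comm r_k1r,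
    push_right_comm r_k2p, push_right_comm r_k2q, push_right_comm r_k2r, push_right_comm r_k3p,
    push_right_comm r_k3q, push_right_comm r_k3r, push_right_comm r_k2k1,
    push_right_comm r_k3k1, push_right_comm r_k3k2, push_right_comm r_k1W,
    push_right_comm r_k2W, push_right_comm r_k3W]
  abel


/-- The value of the Racah "Casimir" `Γ` in `U(sl₂)^{⊗3}`:
`Γ = Z² − 8(XYX + YXY) + 4(k₁+k₂+k₃+k₄−4){X,Y} − 8(k₁−k₂)(k₄−k₃)Y − 8(k₃−k₂)(k₄−k₁)X`
equals `8(k₁−k₂+k₃−k₄)(k₁k₃−k₂k₄) − 32(k₁k₃+k₂k₄)`. -/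
theorem racah_gamma_value {A : Type*} [Ring A]
    (e : Fin 3 → Fin 2 → Fin 2 → A) (h : SL2Cube e) :
    (ZZ e) ^ 2 - 8 * (XX e * YY e * XX e + YY e * XX e * YY e)
      + 4 * ((kA e 0 + kA e 1 + kA e 2 + k4 e - 4) * (XX e * YY e + YY e * XX e))
      - 8 * ((kA e 0 - kA e 1) * (k4 e - kA e 2) * YY e)
      - 8 * ((kA e 2 - kA e 1) * (k4 e - kA e 0) * XX e) =
    8 * ((kA e 0 - kA e 1 + kA e 2 - k4 e) * (kA e 0 * kA e 2 - kA e 1 * k4 e))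
      - 32 * (kA e 0 * kA e 2 + kA e 1 * k4 e) := by
  obtain ⟨h0, h1, h2⟩ := h
  have h11 : ∀ a, e a 1 1 = -e a 0 0 := fun a => by
    rw [eq_neg_iff_add_eq_zero, add_comm]; exact h0 a
  have hc : ∀ a b : Fin 3, a ≠ b → ∀ i j k l : Fin 2, e a i j * e b k l = e b k l * e a i j :=
    fun a b hab i j k l => h2 a b hab i j k l
  have hef : ∀ a, e a 0 1 * e a 1 0 = e a 1 0 * e a 0 1 + (2:ℤ) • e a 0 0 := fun a => by
    have := h1 a 0 1 1 0
    simp only [if_true, h11] at this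
    rw [sub_eq_iff_eq_add] at this
    rw [this]; abel
  have heh : ∀ a, e a 0 1 * e a 0 0 = e a 0 0 * e a 0 1 - e a 0 1 := fun a => by
    have := h1 a 0 1 0 0
    simp at this
    rw [sub_eq_iff_eq_add] at this
    rw [this]; abel
  have hhf : ∀ a, e a 0 0 * e a 1 0 = e a 1 0 * e a 0 0 - e a 1 0 := fun a => by
    have := h1 a 0 0 1 0
    simp at this
    rw [sub_eq_iff_eq_add] at this
    rw [this]; abel
  have hT : ∀ a b, T2 e a b = (2:ℤ) • (e a 0 0 * e b 0 0) + e a 0 1 * e b 1 0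
      + e a 1 0 * e b 0 1 := fun a b => by
    simp only [T2, Fin.sum_univ_two, h11, neg_mul_neg]; abel
  obtain ⟨r_pq, r_pr, r_qr, r_Wq, r_Wp, r_WW, r_k1p, r_k1q, r_k1r, r_k2p, r_k2q, r_k2r, r_k3p, r_k3q, r_k3r, r_k2k1, r_k3k1, r_k3k2, r_k1W, r_k2W, r_k3W⟩ :=
    trace_relations
      (hhf 0) (hef 0) (heh 0) (hc 1 0 (by decide) _ _ _ _) (hc 1 0 (by decide) _ _ _ _)
      (hc 1 0 (by decide) _ _ _ _) (hc 1 0 (by decide) _ _ _ _) (hc 1 0 (by decide) _ _ _ _)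
      (hc 1 0 (by decide) _ _ _ _) (hhf 1) (hc 1 0 (by decide) _ _ _ _)
      (hc 1 0 (by decide) _ _ _ _) (hc 1 0 (by decide) _ _ _ _) (hef 1) (heh 1)
      (hc 2 0 (by decide) _ _ _ _) (hc 2 0 (by decide) _ _ _ _) (hc 2 0 (by decide) _ _ _ _)
      (hc 2 1 (by decide) _ _ _ _) (hc 2 1 (by decide) _ _ _ _) (hc 2 1 (by decide) _ _ _ _)
      (hc 2 0 (by decide) _ _ _ _) (hc 2 0 (by decide) _ _ _ _) (hc 2 0 (by decide) _ _ _ _)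
      (hc 2 1 (by decide) _ _ _ _) (hc 2 1 (by decide) _ _ _ _) (hc 2 1 (by decide) _ _ _ _)
      (hhf 2) (hc 2 0 (by decide) _ _ _ _) (hc 2 0 (by decide) _ _ _ _)
      (hc 2 0 (by decide) _ _ _ _) (hc 2 1 (by decide) _ _ _ _) (hc 2 1 (by decide) _ _ _ _)
      (hc 2 1 (by decide) _ _ _ _) (hef 2) (heh 2)
      (hT 0 0) (hT 1 1) (hT 2 2) (hT 0 1) (hT 1 2) (hT 0 2) rfl
  have two_mul_smul : ∀ x : A, 2 * x = (2:ℤ) • x := fun x => by rw [two_mul, two_smul]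
  have key := gamma_of_relations
      r_pq r_pr r_qr r_Wq r_Wp r_WW r_k1p r_k1q r_k1r r_k2p r_k2q r_k2r r_k3p r_k3q r_k3r
      r_k2k1 r_k3k1 r_k3k2 r_k1W r_k2W r_k3W
      (X := XX e) (Y := YY e) (k := k4 e)
      (by rw [← two_mul_smul]; rfl) (by rw [← two_mul_smul]; rfl) (by rw [← two_mul_smul]; rfl)
  simp only [zsmul_eq_mul, Int.cast_ofNat, mul_one] at key
  rw [pow_two]
  exact key
end
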